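/- The function h ↦ λ_h = ‖π_h (dQ_{log d}) π_h‖_{L²(ν)→L²(ν)} is continuous on ℝ, with lim_{h→−∞} λ_h = d and lim_{h→+∞} λ_h = 0. Consequently h ↦ λ_h is a decreasing homeomorphism from ℝ onto (0, d). -/

import Mathlib

open MeasureTheory ProbabilityTheory

/-!
Truncating an integral operator to `[h, ∞)` multiplies its kernel by the indicator function of
`[h, ∞) × [h, ∞)`. The operator norm is at most the `L²` norm of the kernel, so dominated
convergence of the kernels gives convergence in norm of the truncations, hence continuity in `h`
and both limits.

An operator with a square integrable kernel maps weakly convergent sequences to convergent ones, so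
it attains its norm on the unit ball; if the kernel is positive, it does so at some `f ≥ 0`, and
enlarging the truncation set strictly increases the norm of the image of `f`. This gives strict
monotonicity.

The operator `f ↦ 𝔼[f (ρ a + √(1 - ρ²) Y)]`, with `Y` Gaussian, has the Mehler kernel, which is
square integrable because `|ρ| < 1`. Its norm is `1`: it is an average of `f` along a measure
preserving map, so Jensen's inequality applies, and it fixes the constants.
-/

open Filter Set Topology

open scoped NNReal Real RealInnerProductSpace

section L2

variable {α : Type*} [MeasurableSpace α] {μ : Measure α}

lemma norm_sq_eq_integral_sq (f : Lp ℝ 2 μ) : ‖f‖ ^ 2 = ∫ a, f a ^ 2 ∂μ := by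
  rw [← real_inner_self_eq_norm_sq, L2.inner_def]
  simp only [sq, RCLike.inner_apply, conj_trivial]

lemma norm_toLp_eq_sqrt_integral_sq {g : α → ℝ} (hg : MemLp g 2 μ) :
    ‖hg.toLp g‖ = √(∫ a, g a ^ 2 ∂μ) := by
  rw [← Real.sqrt_sq (norm_nonneg _), norm_sq_eq_integral_sq]
  congr 1
  refine integral_congr_ae ?_
  filter_upwards [hg.coeFn_toLp] with a ha
  rw [ha]

lemma integral_mul_eq_inner_toLp {g : α → ℝ} (hg : MemLp g 2 μ) (f : Lp ℝ 2 μ) :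
    ∫ a, g a * f a ∂μ = ⟪f, hg.toLp g⟫ := by
  rw [L2.inner_def]
  refine integral_congr_ae ?_
  filter_upwards [hg.coeFn_toLp] with a ha
  simp only [ha, RCLike.inner_apply, conj_trivial]

lemma abs_integral_mul_le_sqrt_mul_norm {g : α → ℝ} (hg : MemLp g 2 μ) (f : Lp ℝ 2 μ) :
    |∫ a, g a * f a ∂μ| ≤ √(∫ a, g a ^ 2 ∂μ) * ‖f‖ := by
  rw [integral_mul_eq_inner_toLp hg, ← norm_toLp_eq_sqrt_integral_sq hg, mul_comm]
  exact abs_real_inner_le_norm _ _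

lemma norm_lt_norm_of_nonneg_of_lt {f g : Lp ℝ 2 μ} (hf : 0 ≤ f) (hfg : f < g) : ‖f‖ < ‖g‖ := by
  have hinner : 0 ≤ ⟪f, g - f⟫ := by
    rw [L2.inner_def]
    refine integral_nonneg_of_ae ?_
    filter_upwards [(Lp.coeFn_nonneg _).2 hf, (Lp.coeFn_nonneg _).2 (sub_nonneg.2 hfg.le)]
      with a hfa hga
    simpa only [RCLike.inner_apply, conj_trivial, Pi.zero_apply] using mul_nonneg hga hfa
  have hpos : 0 < ‖g - f‖ := norm_pos_iff.2 (sub_ne_zero.2 hfg.ne')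
  have hexpand : ‖g‖ ^ 2 = ‖f‖ ^ 2 + 2 * ⟪f, g - f⟫ + ‖g - f‖ ^ 2 := by
    rw [← norm_add_sq_real, add_sub_cancel]
  refine lt_of_pow_lt_pow_left₀ 2 (norm_nonneg _) ?_
  rw [hexpand]
  linarith [pow_pos hpos 2]

lemma tendsto_integral_sq_zero_of_dominated {ι : Type*} {l : Filter ι} [l.IsCountablyGenerated]
    {F : ι → α → ℝ} {g : α → ℝ} (hF : ∀ i, AEStronglyMeasurable (F i) μ) (hg : MemLp g 2 μ)
    (hFg : ∀ i, ∀ᵐ a ∂μ, |F i a| ≤ |g a|) (hlim : ∀ᵐ a ∂μ, Tendsto (F · a) l (𝓝 0)) :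
    Tendsto (fun i => ∫ a, F i a ^ 2 ∂μ) l (𝓝 0) := by
  rw [← integral_zero α ℝ (μ := μ)]
  refine tendsto_integral_filter_of_dominated_convergence (fun a => g a ^ 2)
    (.of_forall fun i => (hF i).pow 2) (.of_forall fun i => ?_) hg.integrable_sq ?_
  · filter_upwards [hFg i] with a ha
    rwa [Real.norm_of_nonneg (sq_nonneg _), sq_le_sq]
  · filter_upwards [hlim] with a ha
    simpa using ha.pow 2

end L2

lemma memLp_two_prodMk_left {α β : Type*} [MeasurableSpace α] [MeasurableSpace β] {μ : Measure α}
    {ν : Measure β} [SFinite μ] [SFinite ν] {k : α × β → ℝ} (hk : MemLp k 2 (μ.prod ν)) :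
    ∀ᵐ a ∂μ, MemLp (fun z => k (a, z)) 2 ν := by
  filter_upwards [hk.aestronglyMeasurable.prodMk_left, hk.integrable_sq.prod_right_ae]
    with a hmeas hint
  exact (memLp_two_iff_integrable_sq hmeas).2 hint

lemma exists_subseq_tendsto_inner {E : Type*} [NormedAddCommGroup E] [InnerProductSpace ℝ E]
    [CompleteSpace E] [TopologicalSpace.SeparableSpace E] {f : ℕ → E} {r : ℝ}
    (hf : ∀ n, ‖f n‖ ≤ r) :
    ∃ g : E, ‖g‖ ≤ r ∧ ∃ φ : ℕ → ℕ, StrictMono φ ∧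
      ∀ x, Tendsto (fun n => ⟪f (φ n), x⟫) atTop (𝓝 ⟪g, x⟫) := by
  obtain ⟨w, hw, φ, hφ, hlim⟩ := WeakDual.isSeqCompact_closedBall ℝ E 0 r
    (x := fun n => StrongDual.toWeakDual (InnerProductSpace.toDual ℝ E (f n)))
    (fun n => by simpa using hf n)
  refine ⟨(InnerProductSpace.toDual ℝ E).symm (WeakDual.toStrongDual w), by simpa using hw, φ, hφ,
    fun x => ?_⟩
  rw [InnerProductSpace.toDual_symm_apply]
  exact ((WeakDual.eval_continuous x).tendsto w).comp hlim

lemma range_eq_Ioo_of_strictAnti {f : ℝ → ℝ} {a b : ℝ} (hf : Continuous f) (hanti : StrictAnti f)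
    (hbot : Tendsto f atBot (𝓝 b)) (htop : Tendsto f atTop (𝓝 a)) : range f = Ioo a b := by
  refine Subset.antisymm ?_ fun c hc => ?_
  · rintro _ ⟨x, rfl⟩
    exact ⟨(hanti.antitone.le_of_tendsto htop _).trans_lt (hanti (lt_add_one x)),
      (hanti (sub_one_lt x)).trans_le (hanti.antitone.ge_of_tendsto hbot _)⟩
  · exact mem_range_of_exists_le_of_exists_ge hf
      ((htop.eventually_lt_const hc.1).exists.imp fun _ => le_of_lt)
      ((hbot.eventually_const_lt hc.2).exists.imp fun _ => le_of_lt)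

/-- `T` is the integral operator from `L²(ν)` to `L²(μ)` with kernel `k`. Nothing is assumed on `k`;
where the Bochner integral is needed to be a genuine one, `k` is taken in `L²(μ ⊗ ν)`. -/
def IsIntegralOperator {α β : Type*} [MeasurableSpace α] [MeasurableSpace β] {μ : Measure α}
    {ν : Measure β} (T : Lp ℝ 2 ν →L[ℝ] Lp ℝ 2 μ) (k : α × β → ℝ) : Prop :=
  ∀ f : Lp ℝ 2 ν, T f =ᵐ[μ] fun a => ∫ z, k (a, z) * f z ∂ν

namespace IsIntegralOperator

variable {α β : Type*} [MeasurableSpace α] [MeasurableSpace β] {μ : Measure α} {ν : Measure β}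
  {T T' : Lp ℝ 2 ν →L[ℝ] Lp ℝ 2 μ} {k k' : α × β → ℝ}

section Algebra

lemma zero : IsIntegralOperator (0 : Lp ℝ 2 ν →L[ℝ] Lp ℝ 2 μ) 0 := fun f => by
  simp only [Pi.zero_apply, zero_mul, integral_zero]
  exact Lp.coeFn_zero ℝ 2 μ

lemma const_smul (hT : IsIntegralOperator T k) (c : ℝ) : IsIntegralOperator (c • T) (c • k) := by
  intro f
  filter_upwards [hT f, Lp.coeFn_smul c (T f)] with a hTa hca
  simp only [smul_apply, hca, Pi.smul_apply, hTa, smul_eq_mul, mul_assoc, integral_const_mul]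

lemma indicator_comp_comp_indicator (hT : IsIntegralOperator T k) {B : Set α} {C : Set β}
    {P : Lp ℝ 2 μ →L[ℝ] Lp ℝ 2 μ} (hP : ∀ f, P f =ᵐ[μ] B.indicator f)
    {R : Lp ℝ 2 ν →L[ℝ] Lp ℝ 2 ν} (hR : ∀ f, R f =ᵐ[ν] C.indicator f) :
    IsIntegralOperator (P ∘L T ∘L R) ((B ×ˢ C).indicator k) := by
  intro f
  filter_upwards [hP (T (R f)), hT (R f)] with a hPa hTa
  rw [ContinuousLinearMap.comp_apply, ContinuousLinearMap.comp_apply, hPa]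
  by_cases ha : a ∈ B
  · rw [indicator_of_mem ha, hTa]
    refine integral_congr_ae ?_
    filter_upwards [hR f] with z hz
    by_cases hzC : z ∈ C <;> simp [hz, ha, hzC]
  · simp [ha]

end Algebra

section HilbertSchmidt

variable [SFinite μ] [SFinite ν]

lemma sub (hT : IsIntegralOperator T k) (hT' : IsIntegralOperator T' k')
    (hk : MemLp k 2 (μ.prod ν)) (hk' : MemLp k' 2 (μ.prod ν)) :
    IsIntegralOperator (T - T') (k - k') := by
  intro f
  filter_upwards [hT f, hT' f, Lp.coeFn_sub (T f) (T' f), memLp_two_prodMk_left hk,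
    memLp_two_prodMk_left hk'] with a hTa hTa' hsub hka hka'
  simp only [sub_apply, hsub, Pi.sub_apply, hTa, hTa', sub_mul]
  exact (integral_sub (hka.integrable_mul (Lp.memLp f)) (hka'.integrable_mul (Lp.memLp f))).symm

lemma abs_apply_le (hT : IsIntegralOperator T k) (hk : MemLp k 2 (μ.prod ν)) (f : Lp ℝ 2 ν) :
    ∀ᵐ a ∂μ, |T f a| ≤ √(∫ z, k (a, z) ^ 2 ∂ν) * ‖f‖ := by
  filter_upwards [hT f, memLp_two_prodMk_left hk] with a hTa hka
  rw [hTa]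
  exact abs_integral_mul_le_sqrt_mul_norm hka f

lemma opNorm_le_sqrt_integral_sq (hT : IsIntegralOperator T k) (hk : MemLp k 2 (μ.prod ν)) :
    ‖T‖ ≤ √(∫ p, k p ^ 2 ∂(μ.prod ν)) := by
  refine T.opNorm_le_bound (Real.sqrt_nonneg _) fun f => le_of_sq_le_sq ?_ (by positivity)
  calc ‖T f‖ ^ 2
      = ∫ a, T f a ^ 2 ∂μ := norm_sq_eq_integral_sq _
    _ ≤ ∫ a, (∫ z, k (a, z) ^ 2 ∂ν) * ‖f‖ ^ 2 ∂μ := by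
        refine integral_mono_ae (Lp.memLp _).integrable_sq
          (hk.integrable_sq.integral_prod_left.mul_const _) ?_
        filter_upwards [hT.abs_apply_le hk f] with a ha
        have hsq := sq_le_sq' (neg_le_of_abs_le ha) (le_of_abs_le ha)
        rwa [mul_pow, Real.sq_sqrt (integral_nonneg fun _ => sq_nonneg _)] at hsq
    _ = (√(∫ p, k p ^ 2 ∂(μ.prod ν)) * ‖f‖) ^ 2 := by
        rw [integral_mul_const, ← integral_prod _ hk.integrable_sq, mul_pow,
          Real.sq_sqrt (integral_nonneg fun _ => sq_nonneg _)]

lemma tendsto_of_dominated {ι : Type*} {l : Filter ι} [l.IsCountablyGenerated]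
    {A : ι → Lp ℝ 2 ν →L[ℝ] Lp ℝ 2 μ} {κ : ι → α × β → ℝ} {g : α × β → ℝ}
    (hA : ∀ i, IsIntegralOperator (A i) (κ i)) (hT : IsIntegralOperator T k)
    (hκ : ∀ i, AEStronglyMeasurable (κ i) (μ.prod ν)) (hk : MemLp k 2 (μ.prod ν))
    (hg : MemLp g 2 (μ.prod ν)) (hκg : ∀ i, ∀ᵐ p ∂(μ.prod ν), |κ i p| ≤ |g p|)
    (hlim : ∀ᵐ p ∂(μ.prod ν), Tendsto (κ · p) l (𝓝 (k p))) : Tendsto A l (𝓝 T) := by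
  have hmem (i : ι) : MemLp (κ i) 2 (μ.prod ν) := hg.mono (hκ i) (hκg i)
  have hsq : Tendsto (fun i => ∫ p, (κ i - k) p ^ 2 ∂(μ.prod ν)) l (𝓝 0) := by
    refine tendsto_integral_sq_zero_of_dominated (g := fun p => |g p| + |k p|)
      (fun i => ((hmem i).sub hk).aestronglyMeasurable) (hg.abs.add hk.abs) (fun i => ?_) ?_
    · filter_upwards [hκg i] with p hp
      rw [abs_of_nonneg (by positivity : 0 ≤ |g p| + |k p|)]
      exact (abs_sub _ _).trans (by gcongr)
    · filter_upwards [hlim] with p hp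
      simpa using hp.sub_const (k p)
  rw [tendsto_iff_norm_sub_tendsto_zero]
  refine squeeze_zero (fun _ => norm_nonneg _)
    (fun i => ((hA i).sub hT (hmem i) hk).opNorm_le_sqrt_integral_sq ((hmem i).sub hk)) ?_
  simpa only [Real.sqrt_zero] using hsq.sqrt

lemma tendsto_apply_of_tendsto_inner (hT : IsIntegralOperator T k) (hk : MemLp k 2 (μ.prod ν))
    {f : ℕ → Lp ℝ 2 ν} {g : Lp ℝ 2 ν} {r : ℝ} (hf : ∀ n, ‖f n‖ ≤ r)
    (hlim : ∀ x, Tendsto (fun n => ⟪f n, x⟫) atTop (𝓝 ⟪g, x⟫)) :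
    Tendsto (fun n => T (f n)) atTop (𝓝 (T g)) := by
  have hbound : MemLp (fun a => √(∫ z, k (a, z) ^ 2 ∂ν) * (r + ‖g‖)) 2 μ := by
    have hint := hk.integrable_sq.integral_prod_left
    refine MemLp.mul_const ((memLp_two_iff_integrable_sq
      hint.aestronglyMeasurable.aemeasurable.sqrt.aestronglyMeasurable).2 ?_) _
    simpa only [Real.sq_sqrt (integral_nonneg fun _ => sq_nonneg _)] using hint
  have hsq : Tendsto (fun n => ∫ a, T (f n - g) a ^ 2 ∂μ) atTop (𝓝 0) := by
    refine tendsto_integral_sq_zero_of_dominated (fun n => Lp.aestronglyMeasurable _) hbound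
      (fun n => ?_) ?_
    · filter_upwards [hT.abs_apply_le hk (f n - g)] with a ha
      refine ha.trans ((mul_le_mul_of_nonneg_left ?_ (Real.sqrt_nonneg _)).trans (le_abs_self _))
      exact (norm_sub_le _ _).trans (by gcongr; exact hf n)
    · filter_upwards [memLp_two_prodMk_left hk, ae_all_iff.2 fun n => hT (f n - g)] with a hka hTa
      simp only [hTa, integral_mul_eq_inner_toLp hka, inner_sub_left]
      simpa only [sub_self] using (hlim (hka.toLp _)).sub_const ⟪g, hka.toLp _⟫
  simp only [← norm_sq_eq_integral_sq, map_sub] at hsq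
  rw [tendsto_iff_norm_sub_tendsto_zero]
  simpa only [Real.sqrt_sq (norm_nonneg _), Real.sqrt_zero] using hsq.sqrt

lemma exists_norm_apply_eq_opNorm [IsSeparable ν]
    (hT : IsIntegralOperator T k) (hk : MemLp k 2 (μ.prod ν)) :
    ∃ f : Lp ℝ 2 ν, ‖f‖ ≤ 1 ∧ ‖T f‖ = ‖T‖ := by
  have hmax (n : ℕ) : ∃ f : Lp ℝ 2 ν, ‖f‖ ≤ 1 ∧ ‖T‖ - 1 / (n + 1) < ‖T f‖ := by
    obtain ⟨f, hf, hTf⟩ :=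
      T.exists_lt_apply_of_lt_opNorm (sub_lt_self ‖T‖ (Nat.one_div_pos_of_nat (n := n)))
    exact ⟨f, hf.le, hTf⟩
  choose f hf hTf using hmax
  have : Fact ((2 : ENNReal) ≠ ⊤) := ⟨ENNReal.ofNat_ne_top⟩
  obtain ⟨g, hg, φ, hφ, hlim⟩ := exists_subseq_tendsto_inner hf
  refine ⟨g, hg, (T.unit_le_opNorm g hg).antisymm ?_⟩
  refine le_of_tendsto_of_tendsto' (f := fun n => ‖T‖ - 1 / ((φ n : ℝ) + 1)) ?_
    (hT.tendsto_apply_of_tendsto_inner hk (fun n => hf (φ n)) hlim).norm fun n => (hTf (φ n)).le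
  simpa only [sub_zero, Function.comp_def] using
    (tendsto_one_div_add_atTop_nhds_zero_nat.comp hφ.tendsto_atTop).const_sub ‖T‖

end HilbertSchmidt

section Positivity

lemma apply_nonneg (hT : IsIntegralOperator T k) (hk0 : 0 ≤ k) {f : Lp ℝ 2 ν} (hf : 0 ≤ f) :
    0 ≤ T f := by
  refine (Lp.coeFn_nonneg _).1 ?_
  filter_upwards [hT f] with a ha
  rw [ha]
  refine integral_nonneg_of_ae ?_
  filter_upwards [(Lp.coeFn_nonneg f).2 hf] with z hz
  exact mul_nonneg (hk0 _) hz

lemma abs_apply_le_apply_abs (hT : IsIntegralOperator T k) (hk0 : 0 ≤ k) (f : Lp ℝ 2 ν) :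
    |T f| ≤ T |f| := by
  refine (Lp.coeFn_le _ _).1 ?_
  filter_upwards [hT f, hT |f|, Lp.coeFn_abs (T f)] with a hTa hTa' habs
  rw [habs, hTa, hTa']
  refine abs_integral_le_integral_abs.trans_eq (integral_congr_ae ?_)
  filter_upwards [Lp.coeFn_abs f] with z hz
  rw [hz, abs_mul, abs_of_nonneg (hk0 (a, z))]

variable [SFinite μ] [SFinite ν]

lemma apply_le_apply (hT : IsIntegralOperator T k) (hT' : IsIntegralOperator T' k')
    (hk : MemLp k 2 (μ.prod ν)) (hk' : MemLp k' 2 (μ.prod ν)) (hkk' : k ≤ k') {f : Lp ℝ 2 ν}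
    (hf : 0 ≤ f) : T f ≤ T' f :=
  sub_nonneg.1 ((hT'.sub hT hk' hk).apply_nonneg (sub_nonneg.2 hkk') hf)

lemma exists_nonneg_norm_apply_eq_opNorm [IsSeparable ν]
    (hT : IsIntegralOperator T k) (hk : MemLp k 2 (μ.prod ν)) (hk0 : 0 ≤ k) :
    ∃ f : Lp ℝ 2 ν, 0 ≤ f ∧ ‖f‖ ≤ 1 ∧ ‖T f‖ = ‖T‖ := by
  obtain ⟨f, hf, hTf⟩ := hT.exists_norm_apply_eq_opNorm hk
  have habs : ‖|f|‖ ≤ 1 := by rwa [norm_abs_eq_norm]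
  refine ⟨|f|, abs_nonneg f, habs, (T.unit_le_opNorm _ habs).antisymm ?_⟩
  rw [← hTf]
  exact norm_le_norm_of_abs_le_abs ((hT.abs_apply_le_apply_abs hk0 f).trans (le_abs_self _))

lemma ae_eq_zero_of_ae_apply_eq_zero (hT : IsIntegralOperator T k) (hk : MemLp k 2 (μ.prod ν))
    (hk0 : 0 ≤ k) {S : Set α} {B : Set β} (hpos : ∀ p ∈ S ×ˢ B, 0 < k p) (hS : μ S ≠ 0)
    {f : Lp ℝ 2 ν} (hf : 0 ≤ f) (hTf : ∀ᵐ a ∂μ, a ∈ S → T f a = 0) :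
    ∀ᵐ z ∂ν, z ∈ B → f z = 0 := by
  obtain ⟨a, haS, hTa, hka, hTfa⟩ := ((frequently_ae_mem_iff.2 hS).and_eventually
    ((hT f).and ((memLp_two_prodMk_left hk).and hTf))).exists
  have hnonneg : 0 ≤ᵐ[ν] fun z => k (a, z) * f z := by
    filter_upwards [(Lp.coeFn_nonneg f).2 hf] with z hz
    exact mul_nonneg (hk0 _) hz
  have hint : ∫ z, k (a, z) * f z ∂ν = 0 := hTa.symm.trans (hTfa haS)
  filter_upwards [(integral_eq_zero_iff_of_nonneg_ae hnonneg
    (hka.integrable_mul (Lp.memLp f))).1 hint] with z hz hzB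
  exact (mul_eq_zero.1 hz).resolve_left (hpos _ ⟨haS, hzB⟩).ne'

end Positivity

lemma opNorm_pos [SFinite μ] [SigmaFinite ν] (hT : IsIntegralOperator T k)
    (hk : MemLp k 2 (μ.prod ν)) (hk0 : 0 ≤ k) {S : Set α} {B : Set β}
    (hpos : ∀ p ∈ S ×ˢ B, 0 < k p) (hS : μ S ≠ 0) (hB : MeasurableSet B) (hνB : ν B ≠ 0) :
    0 < ‖T‖ := by
  obtain ⟨C, hC, hCB, hC0, hCtop⟩ := Measure.exists_subset_measure_lt_top hB hνB.bot_lt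
  set f := indicatorConstLp 2 hC hCtop.ne (1 : ℝ)
  have hfC : f =ᵐ[ν] C.indicator fun _ => 1 := indicatorConstLp_coeFn
  have hf : 0 ≤ f := by
    refine (Lp.coeFn_nonneg f).1 ?_
    filter_upwards [hfC] with z hz
    rw [hz]
    exact indicator_nonneg (fun _ _ => zero_le_one) z
  refine norm_pos_iff.2 fun hT0 => hC0.ne' (measure_eq_zero_iff_ae_notMem.2 ?_)
  have hTf : ∀ᵐ a ∂μ, a ∈ S → T f a = 0 := by
    filter_upwards [Lp.coeFn_zero ℝ 2 μ] with a ha _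
    rw [hT0, zero_apply, ha, Pi.zero_apply]
  filter_upwards [hT.ae_eq_zero_of_ae_apply_eq_zero hk hk0 hpos hS hf hTf, hfC] with z hz hfz hzC
  rw [hz (hCB hzC), indicator_of_mem hzC] at hfz
  exact zero_ne_one hfz

section Compression

variable {κ : β × β → ℝ} {B B' : Set β} {A A' : Lp ℝ 2 ν →L[ℝ] Lp ℝ 2 ν}

-- `A f` vanishes on `B' \ B`, whereas `A' f` is positive there unless `f = 0` on `B'`.
lemma apply_lt_apply_of_subset [SFinite ν] (hA : IsIntegralOperator A ((B ×ˢ B).indicator κ))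
    (hA' : IsIntegralOperator A' ((B' ×ˢ B').indicator κ)) (hκ : MemLp κ 2 (ν.prod ν))
    (hκ0 : ∀ p, 0 < κ p) (hB : MeasurableSet B) (hB' : MeasurableSet B') (hBB' : B ⊆ B')
    (hνB' : ν (B' \ B) ≠ 0) {f : Lp ℝ 2 ν} (hf : 0 ≤ f) (hAf : A f ≠ 0) : A f < A' f := by
  have hmem' := hκ.indicator (hB'.prod hB')
  refine lt_of_le_of_ne (hA.apply_le_apply hA' (hκ.indicator (hB.prod hB)) hmem'
    (indicator_le_indicator_of_subset (prod_mono hBB' hBB') fun p => (hκ0 p).le) hf)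
    fun heq => hAf (Lp.ext ?_)
  have hpos : ∀ p ∈ (B' \ B) ×ˢ B', 0 < (B' ×ˢ B').indicator κ p := fun p hp => by
    rw [indicator_of_mem (prod_mono_left sdiff_subset hp)]
    exact hκ0 p
  have hzero : ∀ᵐ a ∂ν, a ∈ B' \ B → A' f a = 0 := by
    filter_upwards [hA f] with a ha haB
    simp [← heq, ha, haB.2]
  have hfB' := hA'.ae_eq_zero_of_ae_apply_eq_zero hmem'
    (indicator_nonneg fun p _ => (hκ0 p).le) hpos hνB' hf hzero
  filter_upwards [hA f, Lp.coeFn_zero ℝ 2 ν] with a ha h0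
  rw [ha, h0]
  refine integral_eq_zero_of_ae ?_
  filter_upwards [hfB'] with z hz
  by_cases hzB : z ∈ B
  · simp [hz (hBB' hzB)]
  · simp [hzB]

lemma opNorm_lt_opNorm_of_subset [SigmaFinite ν] [IsSeparable ν]
    (hA : IsIntegralOperator A ((B ×ˢ B).indicator κ))
    (hA' : IsIntegralOperator A' ((B' ×ˢ B').indicator κ)) (hκ : MemLp κ 2 (ν.prod ν))
    (hκ0 : ∀ p, 0 < κ p) (hB : MeasurableSet B) (hB' : MeasurableSet B') (hBB' : B ⊆ B')
    (hνB : ν B ≠ 0) (hνB' : ν (B' \ B) ≠ 0) : ‖A‖ < ‖A'‖ := by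
  have hmem := hκ.indicator (hB.prod hB)
  have hnonneg : 0 ≤ (B ×ˢ B).indicator κ := indicator_nonneg fun p _ => (hκ0 p).le
  have hpos : ∀ p ∈ B ×ˢ B, 0 < (B ×ˢ B).indicator κ p := fun p hp => by
    rw [indicator_of_mem hp]
    exact hκ0 p
  obtain ⟨f, hf, hf1, hAf⟩ := hA.exists_nonneg_norm_apply_eq_opNorm hmem hnonneg
  have hAf0 : A f ≠ 0 := by
    rw [← norm_pos_iff, hAf]
    exact hA.opNorm_pos hmem hnonneg hpos hνB hB hνB
  calc ‖A‖
      = ‖A f‖ := hAf.symm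
    _ < ‖A' f‖ := norm_lt_norm_of_nonneg_of_lt (hA.apply_nonneg hnonneg hf)
        (hA.apply_lt_apply_of_subset hA' hκ hκ0 hB hB' hBB' hνB' hf hAf0)
    _ ≤ ‖A'‖ := A'.unit_le_opNorm f hf1

end Compression

section Truncation

variable {ν : Measure ℝ} {κ : ℝ × ℝ → ℝ} {A : ℝ → Lp ℝ 2 ν →L[ℝ] Lp ℝ 2 ν}
  {T : Lp ℝ 2 ν →L[ℝ] Lp ℝ 2 ν}

lemma tendsto_of_indicator_Ici [SFinite ν] {l : Filter ℝ} [l.IsCountablyGenerated] {S : Set (ℝ × ℝ)}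
    (hA : ∀ h, IsIntegralOperator (A h) ((Ici h ×ˢ Ici h).indicator κ))
    (hT : IsIntegralOperator T (S.indicator κ)) (hκ : MemLp κ 2 (ν.prod ν)) (hS : MeasurableSet S)
    (hlim : ∀ᵐ p ∂(ν.prod ν), ∀ᶠ h in l, p ∈ Ici h ×ˢ Ici h ↔ p ∈ S) : Tendsto A l (𝓝 T) := by
  refine tendsto_of_dominated hA hT (fun h => hκ.aestronglyMeasurable.indicator
    (measurableSet_Ici.prod measurableSet_Ici)) (hκ.indicator hS) hκ
    (fun h => ae_of_all _ fun p => norm_indicator_le_norm_self κ p) ?_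
  filter_upwards [hlim] with p hp
  refine tendsto_const_nhds.congr' ?_
  filter_upwards [hp] with h hh
  by_cases hpS : p ∈ S
  · rw [indicator_of_mem hpS, indicator_of_mem (hh.2 hpS)]
  · rw [indicator_of_notMem hpS, indicator_of_notMem (mt hh.1 hpS)]

lemma continuous_of_indicator_Ici [SFinite ν] [NullSingletonClass ν]
    (hA : ∀ h, IsIntegralOperator (A h) ((Ici h ×ˢ Ici h).indicator κ))
    (hκ : MemLp κ 2 (ν.prod ν)) : Continuous A := by
  refine continuous_iff_continuousAt.2 fun h₀ => tendsto_of_indicator_Ici hA (hA h₀) hκ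
    (measurableSet_Ici.prod measurableSet_Ici) ?_
  have hne : ∀ᵐ a ∂ν, a ≠ h₀ := Measure.ae_ne ν h₀
  have hmem {a : ℝ} (ha : a ≠ h₀) : ∀ᶠ h in 𝓝 h₀, a ∈ Ici h ↔ a ∈ Ici h₀ := by
    rcases ha.lt_or_gt with hlt | hlt
    · filter_upwards [lt_mem_nhds hlt] with h hh
      simp only [mem_Ici, hh.not_ge, hlt.not_ge]
    · filter_upwards [gt_mem_nhds hlt] with h hh
      simp only [mem_Ici, hh.le, hlt.le]
  filter_upwards [Measure.quasiMeasurePreserving_fst.ae hne,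
    Measure.quasiMeasurePreserving_snd.ae hne] with p hp₁ hp₂
  filter_upwards [hmem hp₁, hmem hp₂] with h h₁ h₂
  rw [mem_prod, mem_prod, h₁, h₂]

lemma tendsto_atBot_of_indicator_Ici [SFinite ν]
    (hA : ∀ h, IsIntegralOperator (A h) ((Ici h ×ˢ Ici h).indicator κ))
    (hT : IsIntegralOperator T κ) (hκ : MemLp κ 2 (ν.prod ν)) : Tendsto A atBot (𝓝 T) := by
  rw [← indicator_univ κ] at hT
  refine tendsto_of_indicator_Ici hA hT hκ .univ (ae_of_all _ fun p => ?_)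
  filter_upwards [eventually_le_atBot p.1, eventually_le_atBot p.2] with h h₁ h₂
  simp only [mem_prod, mem_Ici, h₁, h₂, mem_univ, and_self]

lemma tendsto_atTop_of_indicator_Ici [SFinite ν]
    (hA : ∀ h, IsIntegralOperator (A h) ((Ici h ×ˢ Ici h).indicator κ))
    (hκ : MemLp κ 2 (ν.prod ν)) : Tendsto A atTop (𝓝 0) := by
  have hzero : IsIntegralOperator (0 : Lp ℝ 2 ν →L[ℝ] Lp ℝ 2 ν)
      ((∅ : Set (ℝ × ℝ)).indicator κ) := by
    simpa only [indicator_empty'] using zero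
  refine tendsto_of_indicator_Ici hA hzero hκ .empty (ae_of_all _ fun p => ?_)
  filter_upwards [eventually_gt_atTop p.1] with h hh
  simp only [mem_prod, mem_Ici, hh.not_ge, mem_empty_iff_false, false_and]

lemma strictAnti_opNorm_of_indicator_Ici [SigmaFinite ν] [ν.IsOpenPosMeasure]
    (hA : ∀ h, IsIntegralOperator (A h) ((Ici h ×ˢ Ici h).indicator κ))
    (hκ : MemLp κ 2 (ν.prod ν)) (hκ0 : ∀ p, 0 < κ p) : StrictAnti fun h => ‖A h‖ := by
  intro h h' hh
  have hpos {S : Set ℝ} (hS : (interior S).Nonempty) : ν S ≠ 0 :=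
    (Measure.measure_pos_of_nonempty_interior ν hS).ne'
  refine (hA h').opNorm_lt_opNorm_of_subset (hA h) hκ hκ0 measurableSet_Ici measurableSet_Ici
    (Ici_subset_Ici.2 hh.le) (hpos ?_) (hpos ?_)
  · simp only [interior_Ici, nonempty_Ioi]
  · rw [Ici_sdiff_Ici, interior_Ico]
    exact nonempty_Ioo.2 hh

end Truncation

end IsIntegralOperator

section Averaging

variable {Ω Ω₁ Ω₂ : Type*} [MeasurableSpace Ω] [MeasurableSpace Ω₁] [MeasurableSpace Ω₂]
  {γ : Measure Ω} {μ : Measure Ω₁} {ν : Measure Ω₂}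

lemma sq_integral_le_integral_sq [IsProbabilityMeasure μ] {X : Ω₁ → ℝ} (hX : MemLp X 2 μ) :
    (∫ ω, X ω ∂μ) ^ 2 ≤ ∫ ω, X ω ^ 2 ∂μ := by
  have h := variance_nonneg X μ
  rw [variance_eq_sub hX] at h
  exact sub_nonneg.1 h

variable [IsProbabilityMeasure ν] {φ : Ω₁ × Ω₂ → Ω} {T : Lp ℝ 2 γ →L[ℝ] Lp ℝ 2 μ}

lemma norm_apply_le_of_measurePreserving [SFinite μ]
    (hφ : MeasurePreserving φ (μ.prod ν) γ)
    (hT : ∀ f, T f =ᵐ[μ] fun a => ∫ y, f (φ (a, y)) ∂ν) (f : Lp ℝ 2 γ) : ‖T f‖ ≤ ‖f‖ := by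
  have hfφ : MemLp (f ∘ φ) 2 (μ.prod ν) := (Lp.memLp f).comp_measurePreserving hφ
  refine le_of_sq_le_sq ?_ (norm_nonneg _)
  calc ‖T f‖ ^ 2
      = ∫ a, T f a ^ 2 ∂μ := norm_sq_eq_integral_sq _
    _ ≤ ∫ a, ∫ y, f (φ (a, y)) ^ 2 ∂ν ∂μ := by
        refine integral_mono_ae (Lp.memLp _).integrable_sq hfφ.integrable_sq.integral_prod_left ?_
        filter_upwards [hT f, memLp_two_prodMk_left hfφ] with a hTa hfa
        rw [hTa]
        exact sq_integral_le_integral_sq hfa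
    _ = ∫ p, f (φ p) ^ 2 ∂(μ.prod ν) := (integral_prod _ hfφ.integrable_sq).symm
    _ = ∫ x, f x ^ 2 ∂γ := by
        rw [← integral_map (f := fun x => f x ^ 2) hφ.aemeasurable, hφ.map_eq]
        rw [hφ.map_eq]
        exact (Lp.aestronglyMeasurable f).pow 2
    _ = ‖f‖ ^ 2 := (norm_sq_eq_integral_sq f).symm

lemma opNorm_eq_one_of_measurePreserving [IsProbabilityMeasure γ] [IsProbabilityMeasure μ]
    (hφ : MeasurePreserving φ (μ.prod ν) γ)
    (hT : ∀ f, T f =ᵐ[μ] fun a => ∫ y, f (φ (a, y)) ∂ν) : ‖T‖ = 1 := by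
  have hone : T (Lp.const 2 γ 1) = Lp.const 2 μ 1 := by
    refine Lp.ext ?_
    filter_upwards [hT (Lp.const 2 γ 1), Lp.coeFn_const (p := 2) (μ := μ) (1 : ℝ),
      Measure.ae_ae_of_ae_prod (hφ.quasiMeasurePreserving.ae
        (Lp.coeFn_const (p := 2) (μ := γ) (1 : ℝ)))] with a hTa h₁ h₂
    rw [hTa, h₁, integral_congr_ae h₂]
    simp
  refine le_antisymm (T.opNorm_le_bound zero_le_one fun f => ?_) ?_
  · rw [one_mul]
    exact norm_apply_le_of_measurePreserving hφ hT f
  · simpa [hone, Lp.norm_const'] using T.le_opNorm (Lp.const 2 γ 1)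

end Averaging

section Mehler

variable {ρ : ℝ} {v : ℝ≥0}

lemma integrable_exp_mul_sq_gaussianReal {b : ℝ} (hb : 2 * b * v < 1) :
    Integrable (fun x => Real.exp (b * x ^ 2)) (gaussianReal 0 v) := by
  rcases eq_or_ne v 0 with rfl | hv
  · rw [gaussianReal_zero_var]
    exact integrable_dirac (by simp)
  have : (0 : ℝ) < v := NNReal.coe_pos.2 hv.bot_lt
  have hexp : 0 < (2 * (v : ℝ))⁻¹ - b := by
    rw [sub_pos, ← one_div, lt_div_iff₀ (by positivity)]
    linarith
  rw [gaussianReal_of_var_ne_zero _ hv,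
    integrable_withDensity_iff_integrable_smul' (measurable_gaussianPDF _ _)
      (ae_of_all _ fun _ => gaussianPDF_lt_top)]
  refine ((integrable_exp_neg_mul_sq hexp).const_mul (√(2 * π * v))⁻¹).congr
    (ae_of_all _ fun x => ?_)
  simp only [toReal_gaussianPDF, gaussianPDFReal, smul_eq_mul, mul_assoc, ← Real.exp_add]
  congr 2
  field_simp
  ring

/-- The Mehler kernel with correlation `ρ`: the density at `z` of the conditional law
`gaussianReal (ρ * a) ((1 - ρ ^ 2) * v)` with respect to `gaussianReal 0 v`, as a function
of `(a, z)`. -/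
noncomputable def mehlerKernel (ρ : ℝ) (v : ℝ≥0) (p : ℝ × ℝ) : ℝ :=
  (√(1 - ρ ^ 2))⁻¹ *
    Real.exp ((2 * ρ * p.1 * p.2 - ρ ^ 2 * (p.1 ^ 2 + p.2 ^ 2)) / (2 * v * (1 - ρ ^ 2)))

lemma mehlerKernel_pos (hρ : |ρ| < 1) (p : ℝ × ℝ) : 0 < mehlerKernel ρ v p := by
  have hρ' : 0 < 1 - ρ ^ 2 := sub_pos.2 ((sq_lt_one_iff_abs_lt_one ρ).2 hρ)
  unfold mehlerKernel
  positivity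

lemma gaussianPDFReal_eq_mul_mehlerKernel (hρ : |ρ| < 1) (a z : ℝ) :
    gaussianPDFReal (ρ * a) ((1 - ρ ^ 2).toNNReal * v) z
      = gaussianPDFReal 0 v z * mehlerKernel ρ v (a, z) := by
  have hρ' : 0 < 1 - ρ ^ 2 := sub_pos.2 ((sq_lt_one_iff_abs_lt_one ρ).2 hρ)
  have hconst : (√(2 * π * ((1 - ρ ^ 2) * v)))⁻¹ = (√(2 * π * v))⁻¹ * (√(1 - ρ ^ 2))⁻¹ := by
    rw [← mul_inv, ← Real.sqrt_mul (by positivity)]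
    congr 2
    ring
  unfold gaussianPDFReal mehlerKernel
  rw [NNReal.coe_mul, Real.coe_toNNReal _ hρ'.le, hconst, mul_mul_mul_comm, ← Real.exp_add]
  congr 2
  field_simp
  ring

lemma gaussianReal_map_affine (hρ : |ρ| ≤ 1) (a : ℝ) :
    (gaussianReal 0 v).map (fun y => ρ * a + √(1 - ρ ^ 2) * y)
      = gaussianReal (ρ * a) ((1 - ρ ^ 2).toNNReal * v) := by
  have hρ' : 0 ≤ 1 - ρ ^ 2 := sub_nonneg.2 ((sq_le_one_iff_abs_le_one ρ).2 hρ)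
  have hcomp : (fun y => ρ * a + √(1 - ρ ^ 2) * y) = (ρ * a + ·) ∘ (√(1 - ρ ^ 2) * ·) := rfl
  rw [hcomp, ← Measure.map_map (by fun_prop) (by fun_prop), gaussianReal_map_const_mul,
    gaussianReal_map_const_add, mul_zero, zero_add]
  congr 2
  ext
  rw [NNReal.coe_mk, Real.sq_sqrt hρ', Real.coe_toNNReal _ hρ']

lemma integral_affine_gaussianReal_eq_integral_mehlerKernel_mul (hv : v ≠ 0) (hρ : |ρ| < 1)
    (f : ℝ → ℝ) (a : ℝ) :
    ∫ y, f (ρ * a + √(1 - ρ ^ 2) * y) ∂(gaussianReal 0 v)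
      = ∫ z, mehlerKernel ρ v (a, z) * f z ∂(gaussianReal 0 v) := by
  have hρ' : 0 < 1 - ρ ^ 2 := sub_pos.2 ((sq_lt_one_iff_abs_lt_one ρ).2 hρ)
  have hemb : MeasurableEmbedding fun y : ℝ => ρ * a + √(1 - ρ ^ 2) * y :=
    (measurableEmbedding_addLeft _).comp (measurableEmbedding_mulLeft₀ (Real.sqrt_pos.2 hρ').ne')
  rw [← hemb.integral_map, gaussianReal_map_affine hρ.le,
    integral_gaussianReal_eq_integral_smul (mul_ne_zero (Real.toNNReal_pos.2 hρ').ne' hv),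
    integral_gaussianReal_eq_integral_smul hv]
  simp only [gaussianPDFReal_eq_mul_mehlerKernel hρ, smul_eq_mul, mul_assoc]

lemma isIntegralOperator_mehlerKernel (hv : v ≠ 0) (hρ : |ρ| < 1)
    {Q : Lp ℝ 2 (gaussianReal 0 v) →L[ℝ] Lp ℝ 2 (gaussianReal 0 v)}
    (hQ : ∀ f, Q f =ᵐ[gaussianReal 0 v]
      fun a => ∫ y, f (ρ * a + √(1 - ρ ^ 2) * y) ∂(gaussianReal 0 v)) :
    IsIntegralOperator Q (mehlerKernel ρ v) := fun f =>
  (hQ f).trans (.of_forall (integral_affine_gaussianReal_eq_integral_mehlerKernel_mul hv hρ f))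

lemma mehlerKernel_sq_le (hρ : |ρ| < 1) (p : ℝ × ℝ) :
    mehlerKernel ρ v p ^ 2 ≤ (1 - ρ ^ 2)⁻¹ * (Real.exp (|ρ| / (v * (1 + |ρ|)) * p.1 ^ 2) *
      Real.exp (|ρ| / (v * (1 + |ρ|)) * p.2 ^ 2)) := by
  obtain ⟨x, y⟩ := p
  have hρ' : 0 < 1 - ρ ^ 2 := sub_pos.2 ((sq_lt_one_iff_abs_lt_one ρ).2 hρ)
  have hfactor : 1 - ρ ^ 2 = (1 + |ρ|) * (1 - |ρ|) := by rw [← sq_abs]; ring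
  have hcross : 2 * ρ * x * y ≤ |ρ| * (x ^ 2 + y ^ 2) :=
    calc 2 * ρ * x * y
        ≤ |2 * ρ * x * y| := le_abs_self _
      _ = |ρ| * (2 * |x| * |y|) := by rw [abs_mul, abs_mul, abs_mul, abs_two]; ring
      _ ≤ |ρ| * (x ^ 2 + y ^ 2) := by
          gcongr
          rw [← sq_abs x, ← sq_abs y]
          exact two_mul_le_add_sq _ _
  have hexponent : 2 * ((2 * ρ * x * y - ρ ^ 2 * (x ^ 2 + y ^ 2)) / (2 * v * (1 - ρ ^ 2)))
      ≤ |ρ| / (v * (1 + |ρ|)) * x ^ 2 + |ρ| / (v * (1 + |ρ|)) * y ^ 2 :=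
    calc 2 * ((2 * ρ * x * y - ρ ^ 2 * (x ^ 2 + y ^ 2)) / (2 * v * (1 - ρ ^ 2)))
        = (2 * ρ * x * y - ρ ^ 2 * (x ^ 2 + y ^ 2)) / (v * (1 - ρ ^ 2)) := by
          rw [mul_assoc 2 (v : ℝ), ← mul_div_assoc, mul_div_mul_left _ _ two_ne_zero]
      _ ≤ |ρ| * (1 - |ρ|) * (x ^ 2 + y ^ 2) / (v * (1 - ρ ^ 2)) := by
          gcongr
          rw [← sq_abs ρ]
          linarith
      _ = |ρ| / (v * (1 + |ρ|)) * x ^ 2 + |ρ| / (v * (1 + |ρ|)) * y ^ 2 := by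
          rw [hfactor, ← mul_assoc, mul_right_comm |ρ|,
            mul_div_mul_right _ _ (sub_pos.2 hρ).ne']
          ring
  rw [mehlerKernel, mul_pow, inv_pow, Real.sq_sqrt hρ'.le, ← Real.exp_nat_mul, ← Real.exp_add]
  gcongr
  exact_mod_cast hexponent

lemma memLp_mehlerKernel (hv : v ≠ 0) (hρ : |ρ| < 1) :
    MemLp (mehlerKernel ρ v) 2 ((gaussianReal 0 v).prod (gaussianReal 0 v)) := by
  have hcont : Continuous (mehlerKernel ρ v) := by
    unfold mehlerKernel
    fun_prop
  have hexp :
      Integrable (fun x => Real.exp (|ρ| / (v * (1 + |ρ|)) * x ^ 2)) (gaussianReal 0 v) := by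
    refine integrable_exp_mul_sq_gaussianReal ?_
    have hv0 : (v : ℝ) ≠ 0 := NNReal.coe_ne_zero.2 hv
    calc 2 * (|ρ| / (v * (1 + |ρ|))) * v = 2 * |ρ| / (1 + |ρ|) := by field_simp
      _ < 1 := by
        rw [div_lt_one (by positivity)]
        linarith
  rw [memLp_two_iff_integrable_sq hcont.aestronglyMeasurable]
  refine ((hexp.mul_prod hexp).const_mul (1 - ρ ^ 2)⁻¹).mono'
    (hcont.pow 2).aestronglyMeasurable (ae_of_all _ fun p => ?_)
  rw [Real.norm_of_nonneg (sq_nonneg _)]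
  exact mehlerKernel_sq_le hρ p

lemma measurePreserving_mul_add_sqrt_mul (hρ : |ρ| ≤ 1) :
    MeasurePreserving (fun p : ℝ × ℝ => ρ * p.1 + √(1 - ρ ^ 2) * p.2)
      ((gaussianReal 0 v).prod (gaussianReal 0 v)) (gaussianReal 0 v) := by
  have hρ' : 0 ≤ 1 - ρ ^ 2 := sub_nonneg.2 ((sq_le_one_iff_abs_le_one ρ).2 hρ)
  have hcomp : (fun p : ℝ × ℝ => ρ * p.1 + √(1 - ρ ^ 2) * p.2)
      = (fun p : ℝ × ℝ => p.1 + p.2) ∘ Prod.map (ρ * ·) (√(1 - ρ ^ 2) * ·) := rfl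
  refine ⟨by fun_prop, ?_⟩
  rw [hcomp, ← Measure.map_map (by fun_prop) (by fun_prop),
    ← Measure.map_prod_map _ _ (by fun_prop) (by fun_prop), gaussianReal_map_const_mul,
    gaussianReal_map_const_mul]
  refine gaussianReal_conv_gaussianReal.trans ?_
  congr 1
  · simp
  · ext
    rw [NNReal.coe_add, NNReal.coe_mul, NNReal.coe_mul, NNReal.coe_mk, NNReal.coe_mk,
      Real.sq_sqrt hρ']
    ring

end Mehler

theorem stmt_10_general {v : ℝ≥0} (hv : v ≠ 0) {ρ : ℝ} (hρ : |ρ| < 1) {c : ℝ} (hc : 0 < c)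
    {ν : Measure ℝ} (hν : ν = gaussianReal 0 v) (Q : Lp ℝ 2 ν →L[ℝ] Lp ℝ 2 ν)
    (hQ : ∀ f : Lp ℝ 2 ν, Q f =ᵐ[ν] fun a => ∫ y, f (ρ * a + √(1 - ρ ^ 2) * y) ∂ν)
    (Ph : ℝ → Lp ℝ 2 ν →L[ℝ] Lp ℝ 2 ν)
    (hPh : ∀ h (f : Lp ℝ 2 ν), Ph h f =ᵐ[ν] fun a => if h ≤ a then f a else 0)
    (lam : ℝ → ℝ) (hlam : ∀ h, lam h = ‖Ph h ∘L (c • Q) ∘L Ph h‖) :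
    Continuous lam ∧ Tendsto lam atBot (𝓝 c) ∧ Tendsto lam atTop (𝓝 0) ∧ StrictAnti lam ∧
      range lam = Ioo 0 c := by
  subst hν
  obtain rfl : lam = fun h => ‖Ph h ∘L (c • Q) ∘L Ph h‖ := funext hlam
  have := nullSingletonClass_gaussianReal (μ := 0) hv
  have := (gaussianReal_absolutelyContinuous' 0 hv).isOpenPosMeasure
  have hκ : MemLp (c • mehlerKernel ρ v) 2 ((gaussianReal 0 v).prod (gaussianReal 0 v)) :=
    (memLp_mehlerKernel hv hρ).const_smul c
  have hT : IsIntegralOperator (c • Q) (c • mehlerKernel ρ v) :=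
    (isIntegralOperator_mehlerKernel hv hρ hQ).const_smul c
  have hA (h : ℝ) : IsIntegralOperator (Ph h ∘L (c • Q) ∘L Ph h)
      ((Ici h ×ˢ Ici h).indicator (c • mehlerKernel ρ v)) :=
    hT.indicator_comp_comp_indicator (hPh h) (hPh h)
  have hnorm : ‖c • Q‖ = c := by
    rw [norm_smul, Real.norm_of_nonneg hc.le,
      opNorm_eq_one_of_measurePreserving (measurePreserving_mul_add_sqrt_mul hρ.le) hQ, mul_one]
  have hcont := (IsIntegralOperator.continuous_of_indicator_Ici hA hκ).norm
  have hbot := (IsIntegralOperator.tendsto_atBot_of_indicator_Ici hA hT hκ).norm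
  have htop := (IsIntegralOperator.tendsto_atTop_of_indicator_Ici hA hκ).norm
  have hanti := IsIntegralOperator.strictAnti_opNorm_of_indicator_Ici hA hκ
    fun p => mul_pos hc (mehlerKernel_pos hρ p)
  rw [hnorm] at hbot
  rw [norm_zero] at htop
  exact ⟨hcont, hbot, htop, hanti, range_eq_Ioo_of_strictAnti hcont hanti hbot htop⟩

/-- The function h ↦ λ_h = ‖π_h (dQ_{log d}) π_h‖ on L²(ν) is
continuous on ℝ, tends to d as h → -∞ and to 0 as h → +∞; consequently it is a
decreasing homeomorphism from ℝ onto (0, d). -/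
theorem stmt_10 (d : ℕ) (hd : 2 ≤ d)
    (ν : Measure ℝ) (hν : ν = gaussianReal 0 (Real.toNNReal ((d : ℝ) / ((d : ℝ) ^ 2 - 1))))
    (Q : Lp ℝ 2 ν →L[ℝ] Lp ℝ 2 ν)
    (hQ : ∀ f : Lp ℝ 2 ν, (Q f : ℝ → ℝ) =ᵐ[ν]
      fun a => ∫ y, (f : ℝ → ℝ) (a / d + Real.sqrt (1 - 1 / (d : ℝ) ^ 2) * y) ∂ν)
    (Ph : ℝ → (Lp ℝ 2 ν →L[ℝ] Lp ℝ 2 ν))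
    (hPh : ∀ (h : ℝ) (f : Lp ℝ 2 ν), (Ph h f : ℝ → ℝ) =ᵐ[ν]
      fun a => if h ≤ a then (f : ℝ → ℝ) a else 0)
    (lam : ℝ → ℝ) (hlam : ∀ h : ℝ, lam h = ‖Ph h ∘L ((d : ℝ) • Q) ∘L Ph h‖) :
    Continuous lam ∧
    Filter.Tendsto lam Filter.atBot (nhds (d : ℝ)) ∧
    Filter.Tendsto lam Filter.atTop (nhds 0) ∧
    StrictAnti lam ∧
    Set.range lam = Set.Ioo 0 (d : ℝ) := by
  have hd1 : (1 : ℝ) < d := by exact_mod_cast hd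
  have hvar : 0 < (d : ℝ) / ((d : ℝ) ^ 2 - 1) :=
    div_pos (one_pos.trans hd1) (sub_pos.2 (one_lt_pow₀ hd1 two_ne_zero))
  refine stmt_10_general (Real.toNNReal_pos.2 hvar).ne' (ρ := 1 / d) ?_ (one_pos.trans hd1) hν Q
    (by simpa only [one_div_mul_eq_div, one_div_pow] using hQ) Ph hPh lam hlam
  rwa [abs_of_pos (by positivity), div_lt_one (one_pos.trans hd1)]
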